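/- arXiv:1506.04033 — 2 statements merged into one kernel-verified Lean document; each statement's English description precedes it below -/
import Mathlib

section
/- The function d ↦ γ(d) is strictly decreasing on the integers d ≥ 2: for every integer d ≥ 2, γ(d+1) < γ(d), where γ(d) = 2^{d-2} · d² · Γ(d/2)² / (j_{d/2-1, 1})^d. -/
/-- The Bessel function of the first kind `J_ν`, defined for real order `ν`
by its power series (interpreted with real powers `(x/2)^(2k+ν)`). -/
noncomputable def besselJ (ν x : ℝ) : ℝ :=
  ∑' k : ℕ, (-1 : ℝ) ^ k / (k.factorial * Real.Gamma ((k : ℝ) + ν + 1)) *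
    (x / 2) ^ (2 * (k : ℝ) + ν)

/-- `j_{ν,1}`: the smallest positive zero of the Bessel function `J_ν`. -/
noncomputable def besselJZero1 (ν : ℝ) : ℝ := sInf {r : ℝ | 0 < r ∧ besselJ ν r = 0}

/-- The Pleijel constant `γ(d) = 2^{d-2} d² Γ(d/2)² / (j_{d/2-1,1})^d`. -/
noncomputable def pleijelGamma (d : ℕ) : ℝ :=
  2 ^ ((d : ℝ) - 2) * (d : ℝ) ^ 2 * Real.Gamma ((d : ℝ) / 2) ^ 2 /
    besselJZero1 ((d : ℝ) / 2 - 1) ^ (d : ℝ)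

open Set Real

/-- The entire function `∑ (-y)^k / (k! Γ(k + n))`, so that
`J_ν(x) = (x/2)^ν * besselEntire (ν + 1) (x²/4)`. -/
noncomputable def besselEntire (n y : ℝ) : ℝ :=
  ∑' k : ℕ, (-1 : ℝ) ^ k * y ^ k / (k.factorial * Gamma (k + n))

lemma pow_mul_Gamma_le {n : ℝ} (hn : 0 < n) (k : ℕ) : n ^ k * Gamma n ≤ Gamma (k + n) := by
  induction k with
  | zero => simp
  | succ k ih =>
    have h : Gamma ((k + 1 : ℕ) + n) = (k + n) * Gamma (k + n) := by
      rw [← Gamma_add_one (by positivity)]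
      push_cast
      ring_nf
    have hG : 0 < Gamma (k + n) := Gamma_pos_of_pos (by positivity)
    rw [h, pow_succ']
    have : (0 : ℝ) ≤ k := by positivity
    nlinarith [mul_le_mul_of_nonneg_left ih hn.le]

lemma norm_besselEntire_term_le {n : ℝ} (hn : 0 < n) (y : ℝ) (k : ℕ) :
    ‖(-1 : ℝ) ^ k * y ^ k / (k.factorial * Gamma (k + n))‖ ≤
      (|y| / n) ^ k / k.factorial * (Gamma n)⁻¹ := by
  have hG := Gamma_pos_of_pos hn
  have hG' : 0 < Gamma (k + n) := Gamma_pos_of_pos (by positivity)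
  have h := pow_mul_Gamma_le hn k
  rw [norm_div, norm_mul, norm_pow, norm_neg, norm_one, one_pow, one_mul, norm_pow,
    Real.norm_eq_abs, Real.norm_of_nonneg (by positivity), div_pow, div_div, ← div_eq_mul_inv,
    div_div]
  refine div_le_div_of_nonneg_left (by positivity) (by positivity) ?_
  calc n ^ k * k.factorial * Gamma n = k.factorial * (n ^ k * Gamma n) := by ring
    _ ≤ _ := by gcongr

lemma summable_besselEntire {n : ℝ} (hn : 0 < n) (y : ℝ) :
    Summable fun k : ℕ ↦ (-1 : ℝ) ^ k * y ^ k / (k.factorial * Gamma (k + n)) :=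
  Summable.of_norm_bounded ((Real.summable_pow_div_factorial (|y| / n)).mul_right _)
    (norm_besselEntire_term_le hn y)

lemma besselEntire_zero (n : ℝ) : besselEntire n 0 = (Gamma n)⁻¹ := by
  rw [besselEntire, tsum_eq_single 0 (fun k hk ↦ by simp [hk])]
  simp

lemma besselEntire_recurrence {n : ℝ} (hn : 0 < n) (y : ℝ) :
    besselEntire n y = n * besselEntire (n + 1) y - y * besselEntire (n + 2) y := by
  have h1 := (summable_besselEntire (n := n + 1) (by positivity) y).mul_left n
  have h0 := summable_besselEntire hn y
  have key : ∀ k : ℕ, (-1 : ℝ) ^ k * y ^ k / (k.factorial * Gamma (k + n)) -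
      n * ((-1 : ℝ) ^ k * y ^ k / (k.factorial * Gamma (k + (n + 1)))) =
      k * ((-1 : ℝ) ^ k * y ^ k / (k.factorial * Gamma (k + (n + 1)))) := by
    intro k
    have hG : 0 < Gamma (k + n) := Gamma_pos_of_pos (by positivity)
    have : (k : ℝ) + n ≠ 0 := by positivity
    rw [← add_assoc, Gamma_add_one (by positivity)]
    field_simp
    ring
  have hsub : besselEntire n y - n * besselEntire (n + 1) y = -(y * besselEntire (n + 2) y) := by
    have hs := h0.sub h1
    rw [besselEntire, besselEntire, ← tsum_mul_left, ← h0.tsum_sub h1]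
    simp_rw [key] at hs ⊢
    rw [hs.tsum_eq_zero_add, besselEntire, ← tsum_mul_left, ← tsum_neg]
    simp only [Nat.cast_zero, zero_mul, zero_add]
    congr 1
    ext k
    rw [show ((k + 1 : ℕ) : ℝ) + (n + 1) = k + (n + 2) by push_cast; ring, Nat.factorial_succ]
    have hG : 0 < Gamma (k + (n + 2)) := Gamma_pos_of_pos (by positivity)
    push_cast
    field_simp
    ring
  linarith

lemma hasDerivAt_besselEntire {n : ℝ} (hn : 0 < n) (y : ℝ) :
    HasDerivAt (besselEntire n) (-besselEntire (n + 1) y) y := by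
  set r := |y| + 1
  have hr : 0 < r := by positivity
  let g' : ℕ → ℝ → ℝ := fun k z ↦ (-1 : ℝ) ^ k * (k * z ^ (k - 1)) / (k.factorial * Gamma (k + n))
  have hterm : ∀ (k : ℕ) (z : ℝ), g' (k + 1) z =
      -((-1 : ℝ) ^ k * z ^ k / (k.factorial * Gamma (k + (n + 1)))) := by
    intro k z
    have hG : 0 < Gamma (k + (n + 1)) := Gamma_pos_of_pos (by positivity)
    simp only [g', Nat.add_sub_cancel]
    rw [show ((k + 1 : ℕ) : ℝ) + n = k + (n + 1) by push_cast; ring, Nat.factorial_succ]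
    push_cast
    field_simp
    ring
  have hu : Summable fun k ↦ ‖g' k r‖ := by
    rw [← summable_nat_add_iff 1]
    simp_rw [hterm, norm_neg]
    exact (summable_besselEntire (by positivity) r).norm
  have hmain := hasDerivAt_tsum_of_isPreconnected (𝕜 := ℝ) (F := ℝ) hu Metric.isOpen_ball
    (convex_ball (0 : ℝ) r).isPreconnected
    (g := fun (k : ℕ) (z : ℝ) ↦ (-1 : ℝ) ^ k * z ^ k / (k.factorial * Gamma (k + n))) (g' := g')
    (fun k z _ ↦ ((hasDerivAt_pow k z).const_mul _).div_const _) (y₀ := 0) (y := y) ?_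
    (by simpa using hr) (summable_besselEntire hn 0) (by simp [r])
  · have hs : Summable fun k ↦ g' k y := by
      rw [← summable_nat_add_iff 1]
      simp_rw [hterm]
      exact (summable_besselEntire (by positivity) y).neg
    have hsum : ∑' k, g' k y = -besselEntire (n + 1) y := by
      rw [hs.tsum_eq_zero_add]
      simp_rw [hterm]
      rw [tsum_neg]
      simp [g', besselEntire]
    rw [← hsum]
    exact hmain
  · intro k z hz
    have hz' : |z| ≤ r := by
      have := Metric.mem_ball.1 hz
      rw [dist_zero_right, Real.norm_eq_abs] at this
      exact this.le
    simp only [g', norm_div, norm_mul, norm_pow, Real.norm_eq_abs, abs_of_pos hr]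
    gcongr

lemma continuous_besselEntire {n : ℝ} (hn : 0 < n) : Continuous (besselEntire n) :=
  continuous_iff_continuousAt.2 fun y ↦ (hasDerivAt_besselEntire hn y).continuousAt

lemma besselEntire_zero_pos {n : ℝ} (hn : 0 < n) : 0 < besselEntire n 0 := by
  rw [besselEntire_zero]
  exact inv_pos.2 (Gamma_pos_of_pos hn)

/-- The first positive zero moves to the right when the order increases by one. -/
lemma besselEntire_add_one_pos {n Y : ℝ} (hn : 0 < n)
    (h : ∀ z ∈ Ioo 0 Y, 0 < besselEntire n z) {y : ℝ} (hy : y ∈ Ioc 0 Y) :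
    0 < besselEntire (n + 1) y := by
  have hmono : StrictMonoOn (fun z ↦ z ^ n * besselEntire (n + 1) z) (Icc 0 Y) := by
    refine strictMonoOn_of_deriv_pos (convex_Icc 0 Y) ?_ ?_
    · exact ((continuous_rpow_const hn.le).mul
        (continuous_besselEntire (by positivity))).continuousOn
    · intro z hz
      rw [interior_Icc] at hz
      have hd := (hasDerivAt_rpow_const (p := n) (Or.inl hz.1.ne')).mul
        (hasDerivAt_besselEntire (n := n + 1) (by positivity) z)
      have hF := h z hz
      rw [besselEntire_recurrence hn] at hF
      have : n * z ^ (n - 1) * besselEntire (n + 1) z +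
          z ^ n * -besselEntire (n + 1 + 1) z = z ^ (n - 1) *
          (n * besselEntire (n + 1) z - z * besselEntire (n + 2) z) := by
        have hzn : z ^ n = z ^ (n - 1) * z := by
          rw [← rpow_add_one hz.1.ne', sub_add_cancel]
        rw [hzn, show n + 1 + 1 = n + 2 by ring]
        ring
      have hd' := hd.deriv
      rw [this] at hd'
      refine lt_of_lt_of_eq ?_ hd'.symm
      exact mul_pos (rpow_pos_of_pos hz.1 _) hF
  have := hmono ⟨le_rfl, hy.1.le.trans hy.2⟩ ⟨hy.1.le, hy.2⟩ hy.1
  simp only [zero_rpow hn.ne', zero_mul] at this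
  exact pos_of_mul_pos_right this (rpow_nonneg hy.1.le _)

lemma besselEntire_le_mul_add_one {n Y : ℝ} (hn : 0 < n)
    (h : ∀ z ∈ Ioo 0 Y, 0 < besselEntire n z) {y : ℝ} (hy : y ∈ Ioo 0 Y) :
    besselEntire n y ≤ n * besselEntire (n + 1) y := by
  have h1 : ∀ z ∈ Ioo 0 Y, 0 < besselEntire (n + 1) z := fun z hz ↦
    besselEntire_add_one_pos hn h ⟨hz.1, hz.2.le⟩
  have h2 := besselEntire_add_one_pos (by positivity) h1 ⟨hy.1, hy.2.le⟩
  have := besselEntire_recurrence hn y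
  rw [show n + 1 + 1 = n + 2 by ring] at h2
  nlinarith [mul_pos hy.1 h2]

/-- Second-order lower bound for the ratio of consecutive orders. -/
lemma besselEntire_ratio_bound {n Y : ℝ} (hn : 0 < n)
    (h : ∀ z ∈ Ioo 0 Y, 0 < besselEntire n z) {y : ℝ} (hy : y ∈ Ioo 0 Y) :
    (1 / n + y / (n ^ 2 * (n + 1))) * besselEntire n y ≤ besselEntire (n + 1) y := by
  have h1 : ∀ z ∈ Ioo 0 Y, 0 < besselEntire (n + 1) z := fun z hz ↦
    besselEntire_add_one_pos hn h ⟨hz.1, hz.2.le⟩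
  have ha := besselEntire_le_mul_add_one hn h hy
  have hb := besselEntire_le_mul_add_one (by positivity) h1 hy
  have hr := besselEntire_recurrence hn y
  rw [show n + 1 + 1 = n + 2 by ring] at hb
  have hc : besselEntire n y ≤ n * ((n + 1) * besselEntire (n + 2) y) :=
    ha.trans (mul_le_mul_of_nonneg_left hb hn.le)
  have hd := mul_le_mul_of_nonneg_left hc hy.1.le
  rw [show (1 / n + y / (n ^ 2 * (n + 1))) * besselEntire n y =
    (n * (n + 1) * besselEntire n y + y * besselEntire n y) / (n ^ 2 * (n + 1)) by field_simp,
    div_le_iff₀ (by positivity)]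
  nlinarith

lemma exists_first_zero_besselEntire {n : ℝ} (hn : 0 < n) :
    ∃ y, 0 < y ∧ besselEntire n y = 0 ∧ ∀ z ∈ Ioo 0 y, 0 < besselEntire n z := by
  have hcont := continuous_besselEntire hn
  set Y := n * (n + 1) with hY
  have hYpos : 0 < Y := by positivity
  have hne : ({z | besselEntire n z = 0} ∩ Icc 0 (Y + 1)).Nonempty := by
    by_contra hcon
    have hpos : ∀ z ∈ Icc 0 (Y + 1), 0 < besselEntire n z := by
      intro z hz
      by_contra hz'
      obtain ⟨w, hw, hw0⟩ := intermediate_value_Icc' hz.1 hcont.continuousOn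
        ⟨not_lt.1 hz', (besselEntire_zero_pos hn).le⟩
      exact hcon ⟨w, hw0, hw.1, hw.2.trans hz.2⟩
    have h0 : ∀ z ∈ Ioo 0 (Y + 1), 0 < besselEntire n z := fun z hz ↦ hpos z ⟨hz.1.le, hz.2.le⟩
    have h1 : ∀ z ∈ Ioo 0 (Y + 1), 0 < besselEntire (n + 1) z := fun z hz ↦
      besselEntire_add_one_pos hn h0 ⟨hz.1, hz.2.le⟩
    have hmem : Y ∈ Ioo 0 (Y + 1) := ⟨hYpos, by linarith⟩
    have hb := besselEntire_le_mul_add_one (by positivity) h1 hmem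
    have hr := besselEntire_recurrence hn Y
    rw [show n + 1 + 1 = n + 2 by ring] at hb
    have := h0 Y hmem
    nlinarith
  obtain ⟨y, ⟨hy0, hyI⟩, hmin⟩ :=
    (isCompact_Icc.inter_left (isClosed_eq hcont continuous_const)).exists_isLeast hne
  refine ⟨y, lt_of_le_of_ne hyI.1 ?_, hy0, ?_⟩
  · rintro rfl
    exact (besselEntire_zero_pos hn).ne' hy0
  · intro z hz
    by_contra hz'
    obtain ⟨w, hw, hw0⟩ := intermediate_value_Icc' hz.1.le hcont.continuousOn
      ⟨not_lt.1 hz', (besselEntire_zero_pos hn).le⟩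
    have := hmin ⟨hw0, hw.1, hw.2.trans (hz.2.le.trans hyI.2)⟩
    linarith [hw.2, hz.2]

/-- Sturm comparison of `J_{q-1}(x)` with `x ^ a * J_{p-1}(x / √K)`, in the variable `x² / 4`. -/
lemma first_zero_comparison {p q a K yp yq : ℝ} (hp : 0 < p) (hq : 0 < q)
    (hs : 0 < p + q - 2 + a) (hK : 0 < K)
    (hpos : ∀ z ∈ Ioo 0 yp, 0 < besselEntire p z)
    (hyq : 0 < yq) (hzero : besselEntire q yq = 0) (hqpos : ∀ z ∈ Ioo 0 yq, 0 < besselEntire q z)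
    (hcond : ∀ z ∈ Ioo 0 yp, (K - 1) * z * besselEntire p z ≤
      ((q - 1) ^ 2 - (p - 1 + a) ^ 2) / 4 * besselEntire p z + a * z * besselEntire (p + 1) z) :
    K * yp ≤ yq := by
  by_contra! hlt
  have hdiv : ∀ z ∈ Ioc 0 yq, z / K ∈ Ioo 0 yp := fun z hz ↦
    ⟨div_pos hz.1 hK, (div_lt_iff₀ hK).2 (by linarith [hz.2])⟩
  set e := (q - p - a) / 2 with he
  set s := (p + q - 2 + a) / 2 with hs'
  have hs0 : 0 < s := by positivity
  let Ω : ℝ → ℝ := fun y ↦ e * (besselEntire q y * besselEntire p (y / K)) -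
    y * besselEntire (q + 1) y * besselEntire p (y / K) +
    besselEntire q y * (y / K * besselEntire (p + 1) (y / K))
  have hmono : MonotoneOn (fun y ↦ y ^ s * Ω y) (Icc 0 yq) := by
    have hderiv : ∀ y, HasDerivAt Ω
        (e * (-besselEntire (q + 1) y * besselEntire p (y / K) +
            besselEntire q y * (-besselEntire (p + 1) (y / K) * (1 / K))) -
          ((1 * besselEntire (q + 1) y + y * -besselEntire (q + 1 + 1) y) * besselEntire p (y / K) +
            y * besselEntire (q + 1) y * (-besselEntire (p + 1) (y / K) * (1 / K))) +
          (-besselEntire (q + 1) y * (y / K * besselEntire (p + 1) (y / K)) +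
            besselEntire q y * (1 / K * besselEntire (p + 1) (y / K) +
              y / K * (-besselEntire (p + 1 + 1) (y / K) * (1 / K))))) y := by
      intro y
      have hd : HasDerivAt (fun y ↦ y / K) (1 / K) y := (hasDerivAt_id y).div_const K
      have hu := hasDerivAt_besselEntire hq y
      have hu1 := hasDerivAt_besselEntire (n := q + 1) (by positivity) y
      have hv : HasDerivAt (fun y ↦ besselEntire p (y / K)) _ y :=
        (hasDerivAt_besselEntire hp (y / K)).comp (h := fun y ↦ y / K) y hd
      have hv1 : HasDerivAt (fun y ↦ besselEntire (p + 1) (y / K)) _ y :=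
        (hasDerivAt_besselEntire (n := p + 1) (by positivity) (y / K)).comp (h := fun y ↦ y / K) y hd
      exact (((hu.mul hv).const_mul e).sub (((hasDerivAt_id y).mul hu1).mul hv)).add
        (hu.mul (hd.mul hv1))
    refine monotoneOn_of_deriv_nonneg (convex_Icc 0 yq) ?_ ?_ ?_
    · exact ((continuous_rpow_const hs0.le).mul
        (continuous_iff_continuousAt.2 fun y ↦ (hderiv y).continuousAt)).continuousOn
    · intro y hy
      rw [interior_Icc] at hy
      exact ((hasDerivAt_rpow_const (p := s) (Or.inl hy.1.ne')).mul
        (hderiv y)).differentiableAt.differentiableWithinAt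
    · intro y hy
      rw [interior_Icc] at hy
      have hd := ((hasDerivAt_rpow_const (p := s) (Or.inl hy.1.ne')).mul (hderiv y)).deriv
      refine le_of_le_of_eq ?_ hd.symm
      have hyK := hdiv y ⟨hy.1, hy.2.le⟩
      have hu := hqpos y hy
      have hc := hcond _ hyK
      have hru := besselEntire_recurrence hq y
      have hrv := besselEntire_recurrence hp (y / K)
      have hys : y ^ s = y ^ (s - 1) * y := by
        rw [← rpow_add_one hy.1.ne', sub_add_cancel]
      obtain ⟨Y, hY⟩ : ∃ Y, Y = y / K := ⟨_, rfl⟩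
      have hyY : y = K * Y := by rw [hY]; field_simp
      simp only [Ω]
      rw [← hY] at hc hrv ⊢
      have : 0 ≤ y ^ (s - 1) * (besselEntire q y *
          (((q - 1) ^ 2 - (p - 1 + a) ^ 2) / 4 * besselEntire p Y + a * Y * besselEntire (p + 1) Y -
            (K - 1) * Y * besselEntire p Y)) :=
        mul_nonneg (rpow_nonneg hy.1.le _) (mul_nonneg hu.le (by linarith))
      refine this.trans_eq ?_
      rw [hys, show q + 1 + 1 = q + 2 by ring, show p + 1 + 1 = p + 2 by ring]
      generalize y ^ (s - 1) = P
      generalize besselEntire (q + 1) y = u1 at *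
      generalize besselEntire (p + 1) Y = v1 at *
      have hu2 : y * besselEntire (q + 2) y = q * u1 - besselEntire q y := by linarith
      have hv2 : Y * besselEntire (p + 2) Y = p * v1 - besselEntire p Y := by linarith
      generalize besselEntire (q + 2) y = u2 at *
      generalize besselEntire (p + 2) Y = v2 at *
      generalize besselEntire q y = u at *
      generalize besselEntire p Y = v at *
      clear_value e s Ω
      subst he hs' hyY
      have hKY : K * Y / K = Y := by field_simp
      field_simp
      linear_combination 16 * (-(P * (K * Y) * v) * hu2 + P * Y * u * hv2)
  have h0 := hmono ⟨le_rfl, hyq.le⟩ ⟨hyq.le, le_rfl⟩ hyq.le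
  simp only [zero_rpow hs0.ne', zero_mul, Ω, hzero, mul_zero, zero_sub, add_zero] at h0
  have h1 := besselEntire_add_one_pos hq hqpos ⟨hyq, le_rfl⟩
  have h2 := hpos _ (hdiv yq ⟨hyq, le_rfl⟩)
  have h3 := rpow_pos_of_pos hyq s
  have : 0 < yq ^ s * (yq * besselEntire (q + 1) yq * besselEntire p (yq / K)) := by positivity
  linarith

/-- One step of the continued fraction for the ratio of consecutive orders. -/
lemma besselEntire_ratio_step {n y Y r r' : ℝ} (hn : 0 < n) (hy : 0 ≤ y) (hyY : y ≤ Y)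
    (hr : 0 < r) (hr' : 0 ≤ r') (hrr' : 1 ≤ r * (n - Y * r'))
    (h1 : 0 < besselEntire (n + 1) y)
    (h2 : besselEntire (n + 2) y ≤ r' * besselEntire (n + 1) y) :
    0 < besselEntire n y ∧ besselEntire (n + 1) y ≤ r * besselEntire n y := by
  have hrec := besselEntire_recurrence hn y
  have ha : (n - Y * r') * besselEntire (n + 1) y ≤ besselEntire n y := by
    have := mul_le_mul_of_nonneg_left h2 hy
    have := mul_le_mul_of_nonneg_right hyY (mul_nonneg hr' h1.le)
    linarith
  have hb : besselEntire (n + 1) y ≤ r * besselEntire n y := by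
    have := mul_le_mul_of_nonneg_left ha hr.le
    have := mul_le_mul_of_nonneg_right hrr' h1.le
    linarith
  exact ⟨pos_of_mul_pos_right (h1.trans_le hb) hr.le, hb⟩

lemma besselEntire_mem_Icc {n y : ℝ} (hn : 0 < n) (hy : 0 ≤ y) (hyn : 4 * y ≤ n) :
    besselEntire n y ∈ Icc (2 / 3 * (Gamma n)⁻¹) (4 / 3 * (Gamma n)⁻¹) := by
  have hG := inv_pos.2 (Gamma_pos_of_pos hn)
  have hsum := summable_besselEntire hn y
  have hterm : ∀ k : ℕ,
      ‖(-1 : ℝ) ^ (k + 1) * y ^ (k + 1) / ((k + 1).factorial * Gamma ((k + 1 : ℕ) + n))‖ ≤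
        (1 / 4) ^ k * (1 / 4 * (Gamma n)⁻¹) := by
    intro k
    refine (norm_besselEntire_term_le hn y (k + 1)).trans ?_
    rw [← mul_assoc, ← pow_succ]
    gcongr
    have h1 : |y| / n ≤ 1 / 4 := by
      rw [abs_of_nonneg hy, div_le_iff₀ hn]
      linarith
    have h2 : (1 : ℝ) ≤ (k + 1).factorial := by
      exact_mod_cast Nat.one_le_iff_ne_zero.2 (k + 1).factorial_ne_zero
    exact (div_le_self (by positivity) h2).trans (pow_le_pow_left₀ (by positivity) h1 _)
  have hb := tsum_of_norm_bounded
    ((hasSum_geometric_of_lt_one (r := (1 / 4 : ℝ)) (by norm_num) (by norm_num)).mul_right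
      (1 / 4 * (Gamma n)⁻¹)) hterm
  have heq : besselEntire n y = (Gamma n)⁻¹ + ∑' k : ℕ,
      (-1 : ℝ) ^ (k + 1) * y ^ (k + 1) / ((k + 1).factorial * Gamma ((k + 1 : ℕ) + n)) := by
    rw [besselEntire, hsum.tsum_eq_zero_add]
    simp
  rw [Real.norm_eq_abs, abs_le] at hb
  rw [heq]
  constructor <;> linarith

lemma besselEntire_ratio_le_two_div {n y : ℝ} (hn : 0 < n) (hy : 0 ≤ y)
    (hyn : 4 * y ≤ n * (n + 1)) :
    0 < besselEntire n y ∧ besselEntire (n + 1) y ≤ 2 / n * besselEntire n y := by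
  obtain ⟨m, hm⟩ : ∃ m : ℕ, 4 * y ≤ n + m := by
    obtain ⟨m, hm⟩ := exists_nat_ge (4 * y)
    exact ⟨m, by linarith⟩
  induction m generalizing n with
  | zero =>
    rw [Nat.cast_zero, add_zero] at hm
    have h0 := besselEntire_mem_Icc hn hy hm
    have h1 := besselEntire_mem_Icc (n := n + 1) (by positivity) hy (by linarith)
    have hG := inv_pos.2 (Gamma_pos_of_pos hn)
    rw [Gamma_add_one hn.ne', mul_inv] at h1
    refine ⟨by linarith [h0.1], h1.2.trans ?_⟩
    calc 4 / 3 * (n⁻¹ * (Gamma n)⁻¹) = 2 / n * (2 / 3 * (Gamma n)⁻¹) := by ring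
      _ ≤ _ := by gcongr; exact h0.1
  | succ m ih =>
    push_cast at hm
    obtain ⟨h1, h2⟩ := ih (n := n + 1) (by positivity) (by nlinarith) (by linarith)
    refine besselEntire_ratio_step (r' := 2 / (n + 1)) hn hy le_rfl (by positivity) (by positivity)
      ?_ h1 (by rwa [show n + 1 + 1 = n + 2 by ring] at h2)
    rw [show 2 / n * (n - y * (2 / (n + 1))) = (2 * n * (n + 1) - 4 * y) / (n * (n + 1)) by
      field_simp
      ring, le_div_iff₀ (by positivity)]
    linarith

/-- Positivity of the entire Bessel function from a finite continued fraction. -/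
lemma besselEntire_pos_of_continued_fraction {n y Y r₁ r₂ r₃ : ℝ} (hn : 0 < n) (hy : 0 ≤ y)
    (hyY : y ≤ Y) (hr₁ : 0 < r₁) (hr₂ : 0 < r₂) (hr₃ : 0 < r₃)
    (hY : 4 * Y ≤ (n + 3) * (n + 4)) (h₃ : 1 ≤ r₃ * (n + 2 - Y * (2 / (n + 3))))
    (h₂ : 1 ≤ r₂ * (n + 1 - Y * r₃)) (h₁ : 1 ≤ r₁ * (n - Y * r₂)) :
    0 < besselEntire n y := by
  obtain ⟨a1, a2⟩ := besselEntire_ratio_le_two_div (n := n + 3) (by positivity) hy (by nlinarith)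
  rw [show n + 3 + 1 = n + 2 + 2 by ring] at a2
  obtain ⟨b1, b2⟩ := besselEntire_ratio_step (n := n + 2) (by positivity) hy hyY hr₃
    (by positivity) h₃ (by rwa [show n + 2 + 1 = n + 3 by ring])
    (by rwa [show n + 2 + 1 = n + 3 by ring])
  obtain ⟨c1, c2⟩ := besselEntire_ratio_step (n := n + 1) (by positivity) hy hyY hr₂ hr₃.le h₂
    (by rwa [show n + 1 + 1 = n + 2 by ring])
    (by rwa [show n + 1 + 1 = n + 2 by ring, show n + 1 + 2 = n + 2 + 1 by ring])
  exact (besselEntire_ratio_step hn hy hyY hr₁ hr₂.le h₁ c1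
    (by rwa [show n + 1 + 1 = n + 2 by ring] at c2)).1

lemma besselJ_eq {ν x : ℝ} (hx : 0 < x) :
    besselJ ν x = (x / 2) ^ ν * besselEntire (ν + 1) (x ^ 2 / 4) := by
  rw [besselJ, besselEntire, ← tsum_mul_left]
  congr 1
  ext k
  rw [rpow_add (by positivity), rpow_mul (by positivity), rpow_natCast,
    show ((x / 2) ^ (2 : ℝ)) = x ^ 2 / 4 by rw [rpow_two]; ring, ← add_assoc]
  ring

lemma besselJZero1_eq {ν y : ℝ} (hy : 0 < y) (h0 : besselEntire (ν + 1) y = 0)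
    (hpos : ∀ z ∈ Ioo 0 y, 0 < besselEntire (ν + 1) z) : besselJZero1 ν = 2 * √y := by
  refine IsLeast.csInf_eq ⟨⟨by positivity, ?_⟩, ?_⟩
  · rw [besselJ_eq (by positivity), mul_pow, sq_sqrt hy.le,
      show 2 ^ 2 * y / 4 = y by ring, h0, mul_zero]
  · rintro r ⟨hr, hr0⟩
    by_contra! hlt
    have hr2 : r ^ 2 / 4 < y := by
      have : r ^ 2 < (2 * √y) ^ 2 := by gcongr
      rw [mul_pow, sq_sqrt hy.le] at this
      linarith
    rw [besselJ_eq hr] at hr0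
    have := mul_pos (rpow_pos_of_pos (half_pos hr) ν) (hpos _ ⟨by positivity, hr2⟩)
    linarith

lemma Gamma_add_half_sq_le {x : ℝ} (hx : 0 < x) : Gamma (x + 1 / 2) ^ 2 ≤ x * Gamma x ^ 2 := by
  have h := Gamma_mul_add_mul_le_rpow_Gamma_mul_rpow_Gamma hx (t := x + 1) (by positivity)
    (a := 1 / 2) (b := 1 / 2) (by norm_num) (by norm_num) (by norm_num)
  have hG := Gamma_pos_of_pos hx
  rw [show 1 / 2 * x + 1 / 2 * (x + 1) = x + 1 / 2 by ring, ← sqrt_eq_rpow, ← sqrt_eq_rpow,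
    Gamma_add_one hx.ne', ← sqrt_mul hG.le] at h
  have hG2 : 0 < Gamma (x + 1 / 2) := Gamma_pos_of_pos (by positivity)
  calc Gamma (x + 1 / 2) ^ 2 ≤ √(Gamma x * (x * Gamma x)) ^ 2 := by gcongr
    _ = _ := by rw [sq_sqrt (by positivity)]; ring

/-- The hypothesis of `first_zero_comparison` with `p = d / 2`, `q = (d + 1) / 2`, `a = 2 / 5`. -/
lemma comparison_cond_of_ratio_bound {d c z F G : ℝ} (hd : 2 ≤ d)
    (hc : (c - 4 / 5) ^ 2 * (d + 2) ≤ 8 / 25 * (d - 11 / 10)) (hF : 0 ≤ F) (hz : 0 ≤ z)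
    (hG : (1 / (d / 2) + z / ((d / 2) ^ 2 * (d / 2 + 1))) * F ≤ G) :
    (1 + c / d - 1) * z * F ≤
      (((d + 1) / 2 - 1) ^ 2 - (d / 2 - 1 + 2 / 5) ^ 2) / 4 * F + 2 / 5 * z * G := by
  have hd0 : 0 < d := by linarith
  have h1 := mul_le_mul_of_nonneg_left hG (mul_nonneg (by norm_num : (0 : ℝ) ≤ 2 / 5) hz)
  refine le_trans ?_ (add_le_add_right h1 _)
  have key : 0 ≤ (d - 11 / 10) / 40 - (c - 4 / 5) * (z / d) +
      16 / 5 * (z / d) ^ 2 / (d + 2) := by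
    set w := z / d
    have : (d - 11 / 10) / 40 - (c - 4 / 5) * w + 16 / 5 * w ^ 2 / (d + 2) =
      (64 * (w - 5 / 32 * (c - 4 / 5) * (d + 2)) ^ 2 + (d + 2) *
        (1 / 2 * (d - 11 / 10) - 25 / 16 * ((c - 4 / 5) ^ 2 * (d + 2)))) / (20 * (d + 2)) := by
      field_simp
      ring
    rw [this]
    refine div_nonneg (add_nonneg (by positivity) (mul_nonneg (by positivity) ?_)) (by positivity)
    linarith
  have := mul_nonneg key hF
  rw [← sub_nonneg]
  refine this.trans_eq ?_
  field_simp
  ring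

/-- Numerical data for small dimensions: `c` is admissible in `comparison_cond_of_ratio_bound`, and
the continued fraction shows that the first zero of `besselEntire ((d + 1) / 2)` exceeds `Y`. -/
lemma exists_numerical_bound_of_small {d : ℕ} (hd : 2 ≤ d) (hd' : d ≤ 18) : ∃ c Y p₃ p₂ : ℝ,
    0 ≤ c ∧ (c - 4 / 5) ^ 2 * ((d : ℝ) + 2) ≤ 8 / 25 * (d - 11 / 10) ∧
    (d + 1 : ℝ) ^ 4 ≤ 4 * d ^ 2 * (1 + c / d) ^ d * Y ∧
    4 * Y ≤ ((d + 1 : ℝ) / 2 + 3) * ((d + 1) / 2 + 4) ∧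
    0 < p₃ ∧ p₃ ≤ (d + 1) / 2 + 2 - Y * (2 / ((d + 1) / 2 + 3)) ∧
    0 < p₂ ∧ p₂ ≤ (d + 1) / 2 + 1 - Y * p₃⁻¹ ∧ 0 < (d + 1) / 2 - Y * p₂⁻¹ := by
  interval_cases d
  · refine ⟨1, 9 / 4, 5 / 2, 8 / 5, ?_⟩
    norm_num
  · refine ⟨1, 3, 14 / 5, 48 / 25, ?_⟩
    norm_num
  · refine ⟨1, 4, 76 / 25, 109 / 50, ?_⟩
    norm_num
  · refine ⟨1, 521 / 100, 163 / 50, 12 / 5, ?_⟩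
    norm_num
  · refine ⟨1, 331 / 50, 173 / 50, 129 / 50, ?_⟩
    norm_num
  · refine ⟨1, 821 / 100, 73 / 20, 11 / 4, ?_⟩
    norm_num
  · refine ⟨1, 999 / 100, 383 / 100, 289 / 100, ?_⟩
    norm_num
  · refine ⟨1, 299 / 25, 401 / 100, 301 / 100, ?_⟩
    norm_num
  · refine ⟨32 / 25, 549 / 50, 491 / 100, 213 / 50, ?_⟩
    norm_num
  · refine ⟨32 / 25, 1277 / 100, 129 / 25, 113 / 25, ?_⟩
    norm_num
  · refine ⟨32 / 25, 147 / 10, 27 / 5, 477 / 100, ?_⟩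
    norm_num
  · refine ⟨32 / 25, 1677 / 100, 141 / 25, 251 / 50, ?_⟩
    norm_num
  · refine ⟨32 / 25, 949 / 50, 147 / 25, 527 / 100, ?_⟩
    norm_num
  · refine ⟨32 / 25, 2133 / 100, 153 / 25, 551 / 100, ?_⟩
    norm_num
  · refine ⟨32 / 25, 2381 / 100, 127 / 20, 23 / 4, ?_⟩
    norm_num
  · refine ⟨32 / 25, 661 / 25, 659 / 100, 299 / 50, ?_⟩
    norm_num
  · refine ⟨32 / 25, 2921 / 100, 341 / 50, 621 / 100, ?_⟩
    norm_num

lemma first_zero_bound_of_small {d : ℕ} (hd : 2 ≤ d) (hd' : d ≤ 18) {yp yq : ℝ}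
    (hpos : ∀ z ∈ Ioo 0 yp, 0 < besselEntire (d / 2) z) (hyp : 0 < yp)
    (hyq : 0 < yq) (hzero : besselEntire ((d + 1) / 2) yq = 0)
    (hqpos : ∀ z ∈ Ioo 0 yq, 0 < besselEntire ((d + 1) / 2) z) :
    ((d : ℝ) + 1) ^ 4 * yp ^ d < 4 * (d : ℝ) ^ 2 * yq ^ (d + 1) := by
  have hd2 : (2 : ℝ) ≤ d := by exact_mod_cast hd
  obtain ⟨c, Y, p₃, p₂, hc0, hc, hY, hY4, hp₃, h₃, hp₂, h₂, h₁⟩ :=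
    exists_numerical_bound_of_small hd hd'
  have hcomp : (1 + c / d) * yp ≤ yq :=
    first_zero_comparison (a := 2 / 5) (by positivity) (by positivity) (by linarith)
      (by positivity) hpos hyq hzero hqpos fun z hz ↦
        comparison_cond_of_ratio_bound hd2 hc (hpos z hz).le hz.1.le
          (besselEntire_ratio_bound (by positivity) hpos hz)
  have hYq : Y < yq := by
    by_contra! hle
    refine (besselEntire_pos_of_continued_fraction (by positivity) hyq.le hle (inv_pos.2 h₁)
      (inv_pos.2 hp₂) (inv_pos.2 hp₃) hY4 ?_ ?_ (inv_mul_cancel₀ h₁.ne').ge).ne' hzero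
    · rwa [← div_eq_inv_mul, one_le_div hp₃]
    · rwa [← div_eq_inv_mul, one_le_div hp₂]
  calc ((d : ℝ) + 1) ^ 4 * yp ^ d ≤ 4 * d ^ 2 * (1 + c / d) ^ d * Y * yp ^ d := by gcongr
    _ = 4 * d ^ 2 * ((1 + c / d) * yp) ^ d * Y := by rw [mul_pow]; ring
    _ < 4 * d ^ 2 * ((1 + c / d) * yp) ^ d * yq := by gcongr
    _ ≤ 4 * d ^ 2 * yq ^ d * yq := by gcongr
    _ = _ := by ring

lemma first_zero_bound_of_large {d : ℕ} (hd : 18 ≤ d) {yp yq : ℝ}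
    (hpos : ∀ z ∈ Ioo 0 yp, 0 < besselEntire (d / 2) z) (hyp : 0 < yp)
    (hyq : 0 < yq) (hzero : besselEntire ((d + 1) / 2) yq = 0)
    (hqpos : ∀ z ∈ Ioo 0 yq, 0 < besselEntire ((d + 1) / 2) z) :
    ((d : ℝ) + 1) ^ 4 * yp ^ d < 4 * (d : ℝ) ^ 2 * yq ^ (d + 1) := by
  have hd2 : (18 : ℝ) ≤ d := by exact_mod_cast hd
  have hd0 : (0 : ℝ) < d := by linarith
  set z : ℝ := (2 * d - 3) / 16 / yp with hz
  have hzpos : 0 < z := div_pos (by linarith) hyp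
  have hzyp : z * yp = (2 * d - 3) / 16 := by rw [hz]; field_simp
  have hcomp : (1 + z) * yp ≤ yq := by
    refine first_zero_comparison (a := 0) (by positivity) (by positivity) (by linarith)
      (by positivity) hpos hyq hzero hqpos fun w hw ↦ ?_
    have h1 : z * w ≤ (2 * d - 3) / 16 := by
      rw [← hzyp]
      exact mul_le_mul_of_nonneg_left hw.2.le hzpos.le
    have := mul_le_mul_of_nonneg_right h1 (hpos w hw).le
    linarith
  have hexp : 2.718 ≤ (1 + 1 / (d : ℝ)) ^ (d + 1) := by
    have h1 : exp (1 / (d + 1)) ≤ 1 + 1 / d := by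
      have := one_sub_le_exp_neg (1 / ((d : ℝ) + 1))
      rw [exp_neg, le_inv_comm₀ (by rw [sub_pos, div_lt_one (by positivity)]; linarith)
        (exp_pos _)] at this
      refine this.trans_eq ?_
      have : (d : ℝ) + 1 - 1 ≠ 0 := by simpa using hd0.ne'
      field_simp
      ring
    calc (2.718 : ℝ) ≤ exp 1 := by linarith [exp_one_gt_d9]
      _ = exp (1 / (d + 1)) ^ (d + 1) := by
        rw [← exp_nat_mul]
        push_cast
        field_simp
      _ ≤ _ := by gcongr
  have hbern : (1 + 1 / (d : ℝ)) ^ (d + 1) * (d * z) ≤ (1 + z) ^ (d + 1) := by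
    have h1 := one_add_mul_le_pow (a := (1 + z) / (1 + 1 / (d : ℝ)) - 1) (by
      have : 0 < (1 + z) / (1 + 1 / (d : ℝ)) := by positivity
      linarith) (d + 1)
    rw [add_sub_cancel, div_pow, le_div_iff₀ (by positivity)] at h1
    refine le_trans (le_of_eq ?_) h1
    rw [mul_comm]
    congr 1
    push_cast
    field_simp
    ring
  have hpoly : ((d : ℝ) + 1) ^ 4 < 4 * d ^ 3 * 2.718 * ((2 * d - 3) / 16) := by
    obtain ⟨t, ht⟩ : ∃ t : ℝ, (d : ℝ) = 18 + t := ⟨d - 18, by ring⟩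
    have ht0 : 0 ≤ t := by linarith
    rw [ht, ← sub_pos]
    ring_nf
    positivity
  calc ((d : ℝ) + 1) ^ 4 * yp ^ d < 4 * d ^ 3 * 2.718 * ((2 * d - 3) / 16) * yp ^ d := by gcongr
    _ = 4 * d ^ 2 * (2.718 * (d * z)) * yp ^ (d + 1) := by rw [← hzyp]; ring
    _ ≤ 4 * d ^ 2 * ((1 + 1 / (d : ℝ)) ^ (d + 1) * (d * z)) * yp ^ (d + 1) := by gcongr
    _ ≤ 4 * d ^ 2 * (1 + z) ^ (d + 1) * yp ^ (d + 1) := by gcongr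
    _ = 4 * d ^ 2 * ((1 + z) * yp) ^ (d + 1) := by rw [mul_pow]; ring
    _ ≤ _ := by gcongr

theorem pleijelGamma_strict_anti (d : ℕ) (hd : 2 ≤ d) :
    pleijelGamma (d + 1) < pleijelGamma d := by
  have hd2 : (2 : ℝ) ≤ d := by exact_mod_cast hd
  obtain ⟨yp, hyp, hp0, hpos⟩ := exists_first_zero_besselEntire (n := (d : ℝ) / 2) (by positivity)
  obtain ⟨yq, hyq, hq0, hqpos⟩ :=
    exists_first_zero_besselEntire (n := ((d : ℝ) + 1) / 2) (by positivity)
  have hmain : ((d : ℝ) + 1) ^ 4 * yp ^ d < 4 * (d : ℝ) ^ 2 * yq ^ (d + 1) := by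
    rcases le_total d 18 with h | h
    · exact first_zero_bound_of_small hd h hpos hyp hyq hq0 hqpos
    · exact first_zero_bound_of_large h hpos hyp hyq hq0 hqpos
  have hJp : besselJZero1 ((d : ℝ) / 2 - 1) = 2 * √yp :=
    besselJZero1_eq hyp (by rwa [sub_add_cancel]) (by simpa only [sub_add_cancel] using hpos)
  have hJq : besselJZero1 (((d : ℝ) + 1) / 2 - 1) = 2 * √yq :=
    besselJZero1_eq hyq (by rwa [sub_add_cancel]) (by simpa only [sub_add_cancel] using hqpos)
  have hroot : ((d : ℝ) + 1) ^ 2 * (2 * √yp) ^ d < d * (2 * √yq) ^ (d + 1) := by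
    refine lt_of_pow_lt_pow_left₀ 2 (by positivity) ?_
    have hsq : ∀ y : ℝ, 0 < y → ∀ k : ℕ, ((2 * √y) ^ k) ^ 2 = 4 ^ k * y ^ k := by
      intro y hy k
      rw [← pow_mul, mul_comm k, pow_mul, mul_pow, sq_sqrt hy.le, mul_pow]
      norm_num
    rw [mul_pow _ ((2 * √yp) ^ d), mul_pow _ ((2 * √yq) ^ (d + 1)), hsq _ hyp, hsq _ hyq]
    calc (((d : ℝ) + 1) ^ 2) ^ 2 * (4 ^ d * yp ^ d)
        = 4 ^ d * (((d : ℝ) + 1) ^ 4 * yp ^ d) := by ring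
      _ < 4 ^ d * (4 * (d : ℝ) ^ 2 * yq ^ (d + 1)) := by gcongr
      _ = _ := by ring
  have hGamma := Gamma_add_half_sq_le (x := (d : ℝ) / 2) (by positivity)
  rw [← add_div] at hGamma
  have hG : 0 < Gamma ((d : ℝ) / 2) := Gamma_pos_of_pos (by positivity)
  have htwo : (2 : ℝ) ^ ((d : ℝ) + 1 - 2) = 2 * 2 ^ ((d : ℝ) - 2) := by
    rw [show (d : ℝ) + 1 - 2 = (d - 2) + 1 by ring, rpow_add_one (by norm_num), mul_comm]
  unfold pleijelGamma
  rw [rpow_natCast, rpow_natCast]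
  push_cast
  rw [hJp, hJq, htwo, div_lt_div_iff₀ (by positivity) (by positivity)]
  calc 2 * 2 ^ ((d : ℝ) - 2) * ((d : ℝ) + 1) ^ 2 * Gamma (((d : ℝ) + 1) / 2) ^ 2 * (2 * √yp) ^ d
      ≤ 2 * 2 ^ ((d : ℝ) - 2) * ((d : ℝ) + 1) ^ 2 * (d / 2 * Gamma (d / 2) ^ 2) * (2 * √yp) ^ d := by
        gcongr
    _ = 2 ^ ((d : ℝ) - 2) * d * Gamma (d / 2) ^ 2 * (((d : ℝ) + 1) ^ 2 * (2 * √yp) ^ d) := by ring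
    _ < 2 ^ ((d : ℝ) - 2) * d * Gamma (d / 2) ^ 2 * (d * (2 * √yq) ^ (d + 1)) := by gcongr
    _ = _ := by ring
end

section
/- For every integer d ≥ 2, one has γ(d) < 1, i.e. 2^{d-2} · d² · Γ(d/2)² < (j_{d/2-1, 1})^d. -/
open Set

/-- The entire function `t ↦ ∑ (-t)^k / (k! Γ(a + k))`, a solution of `t y'' + a y' + y = 0`. -/
noncomputable def besselClifford (a t : ℝ) : ℝ :=
  ∑' k : ℕ, (-t) ^ k / (k.factorial * Real.Gamma (a + k))

lemma Gamma_le_Gamma_add_nat {a : ℝ} (ha : 1 ≤ a) (k : ℕ) :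
    Real.Gamma a ≤ Real.Gamma (a + k) := by
  induction k with
  | zero => simp
  | succ k ih =>
    have hk : (0 : ℝ) ≤ k := k.cast_nonneg
    have h : Real.Gamma (a + (k + 1 : ℕ)) = (a + k) * Real.Gamma (a + k) := by
      rw [← Real.Gamma_add_one (by positivity)]
      push_cast
      ring_nf
    have hpos : 0 < Real.Gamma (a + k) := Real.Gamma_pos_of_pos (by positivity)
    rw [h]
    nlinarith

lemma summable_besselClifford {a : ℝ} (ha : 1 ≤ a) (t : ℝ) :
    Summable fun k : ℕ ↦ (-t) ^ k / (k.factorial * Real.Gamma (a + k)) := by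
  have hG : 0 < Real.Gamma a := Real.Gamma_pos_of_pos (by positivity)
  refine Summable.of_norm_bounded
    ((Real.summable_pow_div_factorial |t|).div_const (Real.Gamma a)) fun k ↦ ?_
  have hle := Gamma_le_Gamma_add_nat ha k
  have hGk := hG.trans_le hle
  rw [norm_div, norm_pow, norm_neg, norm_mul, Real.norm_eq_abs, Real.norm_of_nonneg hGk.le,
    Real.norm_natCast, div_div]
  gcongr

lemma besselClifford_eq_add_tsum {a : ℝ} (ha : 1 ≤ a) (t : ℝ) :
    besselClifford a t = (Real.Gamma a)⁻¹ +
      ∑' k : ℕ, (-t) ^ (k + 1) / ((k + 1).factorial * Real.Gamma (a + (k + 1 : ℕ))) := by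
  rw [besselClifford, (summable_besselClifford ha t).tsum_eq_zero_add]
  simp

lemma hasDerivAt_besselClifford {a : ℝ} (ha : 1 ≤ a) (t : ℝ) :
    HasDerivAt (besselClifford a) (-besselClifford (a + 1) t) t := by
  have hG : 0 < Real.Gamma a := Real.Gamma_pos_of_pos (by positivity)
  set R := |t| + 1 with hR
  have hshift (x : ℝ) (k : ℕ) : ((k + 1 : ℕ) : ℝ) * x ^ k / (k + 1).factorial
      = x ^ k / k.factorial := by
    rw [Nat.factorial_succ]
    push_cast
    field_simp
  have hu : Summable fun k : ℕ ↦ (k * R ^ (k - 1) / k.factorial) / Real.Gamma a := by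
    rw [← summable_nat_add_iff 1]
    simpa only [Nat.add_sub_cancel, hshift]
      using (Real.summable_pow_div_factorial R).div_const (Real.Gamma a)
  have hd : HasDerivAt (besselClifford a)
      (∑' k : ℕ, (k * (-t) ^ (k - 1) * (-1)) / (k.factorial * Real.Gamma (a + k))) t := by
    refine hasDerivAt_tsum_of_isPreconnected (t := Metric.ball 0 R)
      (g' := fun (k : ℕ) y ↦ (k * (-y) ^ (k - 1) * (-1)) / (k.factorial * Real.Gamma (a + k))) (y₀ := 0)
      hu Metric.isOpen_ball (convex_ball _ _).isPreconnected (fun k y _ ↦ ?_) (fun k y hy ↦ ?_)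
      (by simp [hR]; positivity) (summable_besselClifford ha 0) (by simp [hR])
    · exact ((hasDerivAt_neg y).pow k).div_const _
    · have hle := Gamma_le_Gamma_add_nat ha k
      have hGk := hG.trans_le hle
      have hy' : |y| ≤ R := by simpa using (mem_ball_zero_iff.mp hy).le
      rw [norm_div, norm_mul, norm_mul, norm_mul, norm_pow, norm_neg, norm_neg, norm_one, mul_one,
        Real.norm_eq_abs y, Real.norm_of_nonneg hGk.le, Real.norm_natCast, Real.norm_natCast,
        div_div]
      gcongr
  convert hd using 1
  have hs : Summable fun k : ℕ ↦
      (k * (-t) ^ (k - 1) * (-1)) / (k.factorial * Real.Gamma (a + k)) := by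
    rw [← summable_nat_add_iff 1]
    refine (summable_besselClifford (a := a + 1) (by linarith) t).neg.congr fun k ↦ ?_
    rw [Nat.add_sub_cancel, ← div_div, ← div_div, mul_neg_one, neg_div, hshift, neg_div]
    push_cast
    ring_nf
  rw [hs.tsum_eq_zero_add, besselClifford, ← tsum_neg]
  simp only [Nat.cast_zero, zero_mul, zero_div, zero_add]
  refine tsum_congr fun k ↦ ?_
  rw [Nat.add_sub_cancel, ← div_div, ← div_div, mul_neg_one, neg_div, hshift, neg_div]
  push_cast
  ring_nf

lemma besselClifford_recurrence {a : ℝ} (ha : 1 ≤ a) (t : ℝ) :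
    t * besselClifford (a + 2) t = a * besselClifford (a + 1) t - besselClifford a t := by
  have ha0 : 0 < a := by positivity
  have hG : 0 < Real.Gamma a := Real.Gamma_pos_of_pos ha0
  have h0 := (summable_nat_add_iff 1).mpr (summable_besselClifford ha t)
  have h1 := (summable_nat_add_iff 1).mpr (summable_besselClifford (a := a + 1) (by linarith) t)
  rw [besselClifford_eq_add_tsum ha, besselClifford_eq_add_tsum (a := a + 1) (by linarith),
    besselClifford, Real.Gamma_add_one ha0.ne', mul_add, ← tsum_mul_left, ← tsum_mul_left]
  have hc : a * (a * Real.Gamma a)⁻¹ = (Real.Gamma a)⁻¹ := by field_simp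
  rw [hc, add_sub_add_left_eq_sub, ← (h1.mul_left a).tsum_sub h0]
  refine tsum_congr fun k ↦ ?_
  have hpos : 0 < a + (k + 1) := by positivity
  have e1 : Real.Gamma (a + 1 + (k + 1 : ℕ)) = (a + (k + 1)) * Real.Gamma (a + (k + 1)) := by
    rw [← Real.Gamma_add_one hpos.ne']
    push_cast
    ring_nf
  have e2 : Real.Gamma (a + 2 + k) = (a + (k + 1)) * Real.Gamma (a + (k + 1)) := by
    rw [← Real.Gamma_add_one hpos.ne']
    ring_nf
  have hGk := Real.Gamma_pos_of_pos hpos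
  rw [e1, e2, Nat.factorial_succ]
  push_cast
  field_simp
  ring

lemma continuous_besselClifford {a : ℝ} (ha : 1 ≤ a) : Continuous (besselClifford a) :=
  continuous_iff_continuousAt.mpr fun t ↦ (hasDerivAt_besselClifford ha t).continuousAt

lemma besselClifford_zero_pos {a : ℝ} (ha : 1 ≤ a) : 0 < besselClifford a 0 := by
  rw [besselClifford_eq_add_tsum ha]
  simpa using Real.Gamma_pos_of_pos (by positivity)

/-- Sturm comparison of `besselClifford a` with `t ↦ exp (-c t) (s - t)`, where `s = a (a + 4) / 4`
and `c = 2 / (a + 4)`. -/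
lemma besselClifford_pos_of_forall_lt {a r : ℝ} (ha : 1 ≤ a) (hr0 : 0 < r)
    (hr : r < a * (a + 4) / 4) (hpos : ∀ t ∈ Ioo 0 r, 0 < besselClifford a t) :
    0 < besselClifford a r := by
  have ha0 : 0 < a := by positivity
  set s := a * (a + 4) / 4 with hs
  set c := 2 / (a + 4) with hc
  have hcs : 2 * c * s = a := by rw [hs, hc]; field_simp; ring
  have hcq : a * c + 2 * c - 1 = c ^ 2 * s := by rw [hs, hc]; field_simp; ring
  have hg (t : ℝ) := hasDerivAt_besselClifford ha t
  have hg1 (t : ℝ) : HasDerivAt (besselClifford (a + 1)) (-besselClifford (a + 2) t) t := by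
    convert hasDerivAt_besselClifford (a := a + 1) (by linarith) t using 3
    ring
  have hcg := continuous_besselClifford ha
  have hcg1 := continuous_besselClifford (a := a + 1) (by linarith)
  set g := besselClifford a
  set g₁ := besselClifford (a + 1)
  set M : ℝ → ℝ := fun t ↦ (s - t) * -g₁ t + (1 + c * (s - t)) * g t with hM
  have hsub (t : ℝ) : HasDerivAt (fun t ↦ s - t) (-1) t := by
    simpa using (hasDerivAt_id t).const_sub s
  have hexp (b t : ℝ) : HasDerivAt (fun t ↦ Real.exp (b * t)) (Real.exp (b * t) * b) t := by
    simpa using ((hasDerivAt_id t).const_mul b).exp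
  have hcM : Continuous M := by fun_prop
  have hcpow : Continuous fun t : ℝ ↦ t ^ a := Real.continuous_rpow_const ha0.le
  have hmono : MonotoneOn (fun t ↦ t ^ a * (Real.exp (-c * t) * M t)) (Icc 0 r) := by
    refine monotoneOn_of_hasDerivWithinAt_nonneg
      (f' := fun t ↦ t ^ (a - 1) * Real.exp (-c * t) * (c ^ 2 * (s - t) ^ 2 * g t))
      (convex_Icc _ _) (by fun_prop) (fun t ht ↦ ?_) (fun t ht ↦ ?_)
    all_goals rw [interior_Icc] at ht
    · have hMd : HasDerivAt M _ t := ((hsub t).mul (hg1 t).neg).add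
        ((((hsub t).const_mul c).const_add 1).mul (hg t))
      have hd := (Real.hasDerivAt_rpow_const (p := a) (Or.inl ht.1.ne')).mul
        ((hexp (-c) t).mul hMd)
      refine hd.hasDerivWithinAt.congr_deriv ?_
      have hta : t ^ a = t ^ (a - 1) * t := by
        rw [← Real.rpow_add_one ht.1.ne']
        simp
      have hrec := besselClifford_recurrence ha t
      simp only [hM, Pi.neg_apply, Pi.mul_apply] at hrec ⊢
      rw [hta]
      have key : c ^ 2 * (s - t) ^ 2 * g t =
          a * ((s - t) * -g₁ t + (1 + c * (s - t)) * g t) + t * (-c) *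
            ((s - t) * -g₁ t + (1 + c * (s - t)) * g t) + (g₁ t * t +
            (s - t) * (t * besselClifford (a + 2) t) +
            t * (c * -1 * g t + (1 + c * (s - t)) * -g₁ t)) := by
        rw [hrec]
        linear_combination (-(s - t) * g t) * hcq + g t * hcs
      rw [key]
      ring
    · have := hpos t ht
      have := ht.1
      positivity
  have hMnn : ∀ t ∈ Ioo 0 r, 0 ≤ M t := fun t ht ↦ by
    have h := hmono (left_mem_Icc.mpr hr0.le) (Ioo_subset_Icc_self ht) ht.1.le
    simp only [Real.zero_rpow ha0.ne', zero_mul] at h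
    have ht1 : 0 < t ^ a := Real.rpow_pos_of_pos ht.1 a
    exact nonneg_of_mul_nonneg_right (nonneg_of_mul_nonneg_right h ht1) (Real.exp_pos _)
  have hne : ∀ t ∈ Icc 0 r, s - t ≠ 0 := fun t ht ↦ by linarith [ht.2]
  have hmono' : MonotoneOn (fun t ↦ Real.exp (c * t) * g t / (s - t)) (Icc 0 r) := by
    refine monotoneOn_of_hasDerivWithinAt_nonneg
      (f' := fun t ↦ Real.exp (c * t) * M t / (s - t) ^ 2)
      (convex_Icc _ _) (ContinuousOn.div (by fun_prop) (by fun_prop) hne)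
      (fun t ht ↦ ?_) (fun t ht ↦ ?_)
    all_goals rw [interior_Icc] at ht
    · have hd := ((hexp c t).mul (hg t)).div (hsub t) (hne t (Ioo_subset_Icc_self ht))
      refine hd.hasDerivWithinAt.congr_deriv ?_
      have := hne t (Ioo_subset_Icc_self ht)
      simp only [hM, Pi.mul_apply]
      field_simp
      ring
    · have := hMnn t ht
      positivity
  have h := hmono' (left_mem_Icc.mpr hr0.le) (right_mem_Icc.mpr hr0.le) hr0.le
  have h0 : 0 < g 0 := besselClifford_zero_pos ha
  have hs0 : 0 < s := by positivity
  simp only [mul_zero, Real.exp_zero, one_mul, sub_zero] at h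
  have h' := (div_pos h0 hs0).trans_le h
  exact pos_of_mul_pos_right ((div_pos_iff_of_pos_right (by linarith)).mp h') (Real.exp_pos _).le

lemma besselClifford_pos {a t : ℝ} (ha : 1 ≤ a) (ht0 : 0 ≤ t) (ht : t < a * (a + 4) / 4) :
    0 < besselClifford a t := by
  have hg := continuous_besselClifford ha
  have h0 := besselClifford_zero_pos ha
  by_contra! hle
  have hcomp : IsCompact (Icc 0 t ∩ {x | besselClifford a x ≤ 0}) :=
    isCompact_Icc.inter_right (isClosed_le hg continuous_const)
  obtain ⟨r, ⟨⟨hr0, hrt⟩, hgr⟩, hmin⟩ := hcomp.exists_isLeast ⟨t, ⟨ht0, le_rfl⟩, hle⟩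
  have hr0' : 0 < r := hr0.lt_of_ne (by rintro rfl; exact hgr.not_gt h0)
  refine (besselClifford_pos_of_forall_lt ha hr0' (hrt.trans_lt ht) fun x hx ↦ ?_).not_ge hgr
  by_contra! hx'
  exact hx.2.not_ge (hmin ⟨⟨hx.1.le, hx.2.le.trans hrt⟩, hx'⟩)

lemma besselJ_eq_rpow_mul_besselClifford (ν : ℝ) {x : ℝ} (hx : 0 < x) :
    besselJ ν x = (x / 2) ^ ν * besselClifford (ν + 1) (x ^ 2 / 4) := by
  rw [besselJ, besselClifford, ← tsum_mul_left]
  refine tsum_congr fun k ↦ ?_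
  have h : (x / 2) ^ (2 * (k : ℝ) + ν) = (x / 2) ^ ν * (x ^ 2 / 4) ^ k := by
    rw [Real.rpow_add (by positivity), Real.rpow_mul (by positivity), Real.rpow_natCast,
      Real.rpow_two, mul_comm]
    ring
  rw [h, neg_pow (x ^ 2 / 4), show (k : ℝ) + ν + 1 = ν + 1 + k by ring]
  ring

lemma le_sq_of_besselJ_eq_zero {ν x : ℝ} (hν : 0 ≤ ν) (hx : 0 < x) (h : besselJ ν x = 0) :
    (ν + 1) * (ν + 5) ≤ x ^ 2 := by
  by_contra! hlt
  have hpos := besselClifford_pos (a := ν + 1) (t := x ^ 2 / 4) (by linarith) (by positivity)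
    (by linarith)
  rw [besselJ_eq_rpow_mul_besselClifford ν hx] at h
  have : 0 < (x / 2) ^ ν := by positivity
  exact (mul_pos this hpos).ne' h

/-- Either `besselJZero1 ν` is the default value `0` of an empty infimum,
or the first zero exceeds `ν + 2`. -/
lemma besselJZero1_eq_zero_or_lt {ν : ℝ} (hν : 0 ≤ ν) :
    besselJZero1 ν = 0 ∨ ν + 2 < besselJZero1 ν := by
  rw [besselJZero1]
  rcases {r : ℝ | 0 < r ∧ besselJ ν r = 0}.eq_empty_or_nonempty with h | h
  · left
    rw [h, Real.sInf_empty]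
  · right
    refine lt_of_lt_of_le (b := √((ν + 1) * (ν + 5))) ?_ (le_csInf h fun r hr ↦ ?_)
    · exact Real.lt_sqrt_of_sq_lt (by nlinarith)
    · exact Real.sqrt_le_iff.mpr ⟨hr.1.le, le_sq_of_besselJ_eq_zero hν hr.1 hr.2⟩

lemma four_le_one_add_two_div_pow {n : ℕ} (hn : 2 ≤ n) : (4 : ℝ) ≤ (1 + 2 / n) ^ n := by
  have hn' : (2 : ℝ) ≤ n := by exact_mod_cast hn
  have hb := one_add_mul_self_le_rpow_one_add (s := 2 / (n : ℝ)) (p := (n : ℝ) / 2)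
    (by linarith [show 0 ≤ 2 / (n : ℝ) by positivity]) (by linarith)
  have h1 : (n : ℝ) / 2 * (2 / n) = 1 := by field_simp
  have h2 : (1 + 2 / (n : ℝ)) ^ n = ((1 + 2 / (n : ℝ)) ^ ((n : ℝ) / 2)) ^ 2 := by
    rw [← Real.rpow_mul_natCast (by positivity), ← Real.rpow_natCast]
    push_cast
    ring_nf
  rw [h2]
  nlinarith

lemma Gamma_half_add_one_sq_le {d : ℕ} (hd : 2 ≤ d) :
    Real.Gamma ((d : ℝ) / 2 + 1) ^ 2 ≤ (((d : ℝ) + 2) / 4) ^ d := by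
  induction d using Nat.twoStepInduction with
  | zero => omega
  | one => omega
  | more d ih _ =>
    rcases Nat.lt_or_ge d 2 with h | h
    · interval_cases d
      · norm_num [Real.Gamma_two]
      · have e : Real.Gamma (5 / 2) = 3 / 2 * (1 / 2 * √Real.pi) := by
          rw [← Real.Gamma_one_half_eq, ← Real.Gamma_add_one (by norm_num),
            show (1 / 2 + 1 : ℝ) = 3 / 2 by norm_num, ← Real.Gamma_add_one (by norm_num)]
          norm_num
        norm_num
        rw [e, mul_pow, mul_pow, Real.sq_sqrt Real.pi_nonneg]
        linarith [Real.pi_lt_d2]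
    · have hstep : Real.Gamma (((d + 2 : ℕ) : ℝ) / 2 + 1) =
          ((d : ℝ) / 2 + 1) * Real.Gamma ((d : ℝ) / 2 + 1) := by
        rw [← Real.Gamma_add_one (by positivity)]
        push_cast
        ring_nf
      have hB := four_le_one_add_two_div_pow (n := d + 2) (by omega)
      have hfac : (((d + 2 : ℕ) : ℝ) + 2) / 4 = ((d : ℝ) + 2) / 4 * (1 + 2 / (d + 2 : ℕ)) := by
        push_cast
        field_simp
      rw [hstep, hfac, mul_pow, mul_pow]
      calc ((d : ℝ) / 2 + 1) ^ 2 * Real.Gamma ((d : ℝ) / 2 + 1) ^ 2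
          ≤ ((d : ℝ) / 2 + 1) ^ 2 * (((d : ℝ) + 2) / 4) ^ d := by gcongr; exact ih h
        _ = (((d : ℝ) + 2) / 4) ^ (d + 2) * 4 := by ring
        _ ≤ _ := by gcongr

theorem pleijelGamma_lt_one (d : ℕ) (hd : 2 ≤ d) : pleijelGamma d < 1 := by
  have hd' : (2 : ℝ) ≤ d := by exact_mod_cast hd
  have hd0 : d ≠ 0 := by omega
  rw [pleijelGamma, Real.rpow_natCast]
  rcases besselJZero1_eq_zero_or_lt (ν := (d : ℝ) / 2 - 1) (by linarith) with h | h
  · simp [h, hd0]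
  · have hnum : (2 : ℝ) ^ ((d : ℝ) - 2) * (d : ℝ) ^ 2 * Real.Gamma ((d : ℝ) / 2) ^ 2 =
        2 ^ d * Real.Gamma ((d : ℝ) / 2 + 1) ^ 2 := by
      rw [Real.Gamma_add_one (by positivity), Real.rpow_sub two_pos, Real.rpow_natCast,
        Real.rpow_two]
      ring
    rw [hnum, div_lt_one (pow_pos (by linarith) d)]
    calc 2 ^ d * Real.Gamma ((d : ℝ) / 2 + 1) ^ 2
        ≤ 2 ^ d * (((d : ℝ) + 2) / 4) ^ d := by gcongr; exact Gamma_half_add_one_sq_le hd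
      _ = ((d : ℝ) / 2 - 1 + 2) ^ d := by rw [← mul_pow]; ring
      _ < _ := pow_lt_pow_left₀ h (by linarith) hd0
end
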